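/- The sinc concentration operator commutes with the prolate spheroidal Sturm–Liouville operator. Let c > 0, let K(x,y) = sin(c(x−y))/(π(x−y)) (extended continuously by c/π on the diagonal), and for ψ : [−1,1] → ℝ twice continuously differentiable define (Qψ)(x) = ∫_{−1}^{1} K(x,y) ψ(y) dy and (Lψ)(x) = d/dx[(1−x²) ψ'(x)] − c² x² ψ(x). Then Qψ is smooth and for every x ∈ [−1,1], L(Qψ)(x) = Q(Lψ)(x). Consequently Q and L share eigenfunctions: the prolate spheroidal wave functions solving the Sturm–Liouville equation ((1−x²)ψ')' + (χ − c²x²)ψ = 0 on |x| ≤ 1 are eigenfunctions of the sinc integral operator. -/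

import Mathlib

open MeasureTheory Real

noncomputable section

/-- The sinc concentration kernel `sin(c(x−y))/(π(x−y))`, extended continuously by the
value `c/π` on the diagonal. -/
def sincKernel (c x y : ℝ) : ℝ :=
  if x = y then c / π else Real.sin (c * (x - y)) / (π * (x - y))

/-- The sinc integral (concentration) operator on `[−1,1]`:
`(Qψ)(x) = ∫_{−1}^1 sin(c(x−y))/(π(x−y)) ψ(y) dy`. -/
def Qop (c : ℝ) (ψ : ℝ → ℝ) (x : ℝ) : ℝ :=
  ∫ y in (-1:ℝ)..1, sincKernel c x y * ψ y

/-- The prolate spheroidal Sturm–Liouville operator on `[−1,1]`: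
`(Lψ)(x) = d/dx[(1−x²)ψ'(x)] − c²x²ψ(x)`, with derivatives taken within `[−1,1]`. -/
def Lop (c : ℝ) (ψ : ℝ → ℝ) (x : ℝ) : ℝ :=
  derivWithin (fun t => (1 - t ^ 2) * derivWithin ψ (Set.Icc (-1) 1) t)
    (Set.Icc (-1) 1) x - c ^ 2 * x ^ 2 * ψ x

/-!
The commutation comes from the kernel identity `L_x K(x, y) = L_y K(x, y)`. Differentiating under
the integral sign gives `L(Qψ)(x) = ∫ L_x K(x, y) ψ(y) dy`, the identity moves `L` to the variable
`y`, and the symmetry of `L`, whose boundary terms vanish because `1 - y²` does at `±1`, moves it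
onto `ψ`. For `K(x, y) = (c / π) sinc (c (x - y))` the difference of the two sides of the identity
is a multiple of `x + y` times `u sinc'' u + 2 sinc' u + u sinc u = 0` at `u = c (x - y)`.
-/

section Kernel

open scoped ContDiff

variable {E : Type*} [NormedAddCommGroup E] [NormedSpace ℝ E]
  {a b : ℝ} {K : ℝ → ℝ → ℝ} {f : ℝ → E}

theorem contDiff_uncurry_deriv_left {m n : WithTop ℕ∞} (hK : ContDiff ℝ n ↿K)
    (hmn : m + 1 ≤ n) : ContDiff ℝ m ↿(fun x y => deriv (K · y) x) :=
  ContDiff.fderiv_apply (f := fun (z : ℝ × ℝ) t => K t z.2) (k := fun _ => 1)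
    (hK.comp (contDiff_snd.prodMk (contDiff_snd.comp contDiff_fst))) contDiff_fst
    contDiff_const hmn

theorem hasDerivAt_integral_kernel_smul (hK : ContDiff ℝ 1 ↿K)
    (hf : IntervalIntegrable f volume a b) (x : ℝ) :
    HasDerivAt (fun x => ∫ y in a..b, K x y • f y) (∫ y in a..b, deriv (K · y) x • f y) x := by
  have hK' : Continuous ↿(fun x y => deriv (K · y) x) :=
    (contDiff_uncurry_deriv_left hK (zero_add 1).le).continuous
  have hint {G : ℝ → ℝ → ℝ} (hG : Continuous ↿G) (z : ℝ) :
      IntervalIntegrable (fun y => G z y • f y) volume a b :=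
    hf.continuousOn_smul (hG.comp (.prodMk_right z)).continuousOn
  obtain ⟨M, hM⟩ := ((isCompact_closedBall x 1).prod isCompact_uIcc).exists_bound_of_continuousOn
    hK'.continuousOn (s := Metric.closedBall x 1 ×ˢ Set.uIcc a b)
  refine (intervalIntegral.hasDerivAt_integral_of_dominated_loc_of_deriv_le
    (F' := fun x y => deriv (K · y) x • f y) (bound := fun y => M * ‖f y‖)
    (Metric.closedBall_mem_nhds x one_pos)
    (.of_forall fun z => (hint hK.continuous z).def'.aestronglyMeasurable) (hint hK.continuous x)
    (hint hK' x).def'.aestronglyMeasurable ?_ (hf.norm.const_mul M) ?_).2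
  · refine .of_forall fun y hy z hz => (norm_smul _ _).trans_le ?_
    gcongr
    exact hM (z, y) ⟨hz, Set.uIoc_subset_uIcc hy⟩
  · refine .of_forall fun y _ z _ => HasDerivAt.smul_const ?_ (f y)
    exact ((hK.comp (contDiff_prodMk_left y)).differentiable one_ne_zero z).hasDerivAt

theorem contDiff_integral_kernel_smul (hK : ContDiff ℝ ∞ ↿K)
    (hf : IntervalIntegrable f volume a b) :
    ContDiff ℝ ∞ (fun x => ∫ y in a..b, K x y • f y) := by
  refine contDiff_infty.mpr fun n => ?_
  induction n generalizing K with
  | zero =>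
    exact contDiff_zero.mpr <| continuous_iff_continuousAt.mpr fun x =>
      (hasDerivAt_integral_kernel_smul (hK.of_le (mod_cast le_top)) hf x).continuousAt
  | succ n ih =>
    have hderiv := hasDerivAt_integral_kernel_smul (hK.of_le (mod_cast le_top)) hf
    push_cast
    refine contDiff_succ_iff_deriv.mpr ⟨fun x => (hderiv x).differentiableAt, by simp, ?_⟩
    rw [funext fun x => (hderiv x).deriv]
    exact ih (contDiff_uncurry_deriv_left hK le_rfl)

end Kernel

section SturmLiouville

variable {E : Type*} [NormedAddCommGroup E] [NormedSpace ℝ E]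
  {a b : ℝ} {p q : ℝ → ℝ} {s : Set ℝ} {f : ℝ → E}

/-- The Sturm–Liouville operator `f ↦ (p f')' - q f` on `s`, with derivatives taken within `s` so
that the endpoints of an interval are included. -/
def sturmLiouville (p q : ℝ → ℝ) (s : Set ℝ) (f : ℝ → E) (x : ℝ) : E :=
  derivWithin (fun t => p t • derivWithin f s t) s x - q x • f x

theorem sturmLiouville_eq_of_hasDerivWithinAt {f' : ℝ → E} {f'' : E} {p' x : ℝ}
    (hs : UniqueDiffOn ℝ s) (hx : x ∈ s) (hp : HasDerivWithinAt p p' s x)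
    (hf : ∀ t ∈ s, HasDerivWithinAt f (f' t) s t) (hf' : HasDerivWithinAt f' f'' s x) :
    sturmLiouville p q s f x = p x • f'' + p' • f' x - q x • f x := by
  have hflux : HasDerivWithinAt (fun t => p t • derivWithin f s t) (p x • f'' + p' • f' x) s x :=
    (hp.smul hf').congr_of_mem (fun t ht => by rw [(hf t ht).derivWithin (hs t ht)]; rfl) hx
  rw [sturmLiouville, hflux.derivWithin (hs x hx)]

theorem sturmLiouville_integral_kernel_smul {K : ℝ → ℝ → ℝ} {x : ℝ} (hK : ContDiff ℝ 2 ↿K)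
    (hf : IntervalIntegrable f volume a b) (hs : UniqueDiffOn ℝ s) (hx : x ∈ s)
    (hp : DifferentiableWithinAt ℝ p s x) :
    sturmLiouville p q s (fun t => ∫ y in a..b, K t y • f y) x =
      ∫ y in a..b, sturmLiouville p q s (K · y) x • f y := by
  have hK₁ : ContDiff ℝ 1 ↿(fun x y => deriv (K · y) x) :=
    contDiff_uncurry_deriv_left hK one_add_one_eq_two.le
  have hK₂ : ContDiff ℝ 0 ↿(fun x y => deriv (fun t => deriv (K · y) t) x) :=
    contDiff_uncurry_deriv_left hK₁ (zero_add 1).le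
  have hLK (y : ℝ) : sturmLiouville p q s (K · y) x = p x * deriv (fun t => deriv (K · y) t) x +
      derivWithin p s x * deriv (K · y) x - q x * K x y :=
    sturmLiouville_eq_of_hasDerivWithinAt hs hx hp.hasDerivWithinAt
      (fun t _ => ((hK.comp (contDiff_prodMk_left y)).differentiable
        two_ne_zero t).hasDerivAt.hasDerivWithinAt)
      ((hK₁.comp (contDiff_prodMk_left y)).differentiable
        one_ne_zero x).hasDerivAt.hasDerivWithinAt
  have hint {G : ℝ → ℝ → ℝ} (hG : Continuous ↿G) (r : ℝ) :
      IntervalIntegrable (fun y => r • G x y • f y) volume a b :=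
    (hf.continuousOn_smul (hG.comp (.prodMk_right x)).continuousOn).smul r
  rw [sturmLiouville_eq_of_hasDerivWithinAt hs hx hp.hasDerivWithinAt
    (fun t _ => (hasDerivAt_integral_kernel_smul
      (hK.of_le one_le_two) hf t).hasDerivWithinAt)
    (hasDerivAt_integral_kernel_smul hK₁ hf x).hasDerivWithinAt]
  simp only [hLK, sub_smul, add_smul, mul_smul]
  rw [intervalIntegral.integral_sub ((hint hK₂.continuous _).add (hint hK₁.continuous _))
      (hint hK.continuous _),
    intervalIntegral.integral_add (hint hK₂.continuous _) (hint hK₁.continuous _)]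
  simp only [intervalIntegral.integral_smul]

variable [CompleteSpace E]

theorem integral_smul_derivWithin_eq_neg_of_boundary_eq_zero {u : ℝ → ℝ} {v : ℝ → E} (hab : a < b)
    (hu : ContDiffOn ℝ 1 u (Set.Icc a b)) (hv : ContDiffOn ℝ 1 v (Set.Icc a b))
    (ha : u a • v a = 0) (hb : u b • v b = 0) :
    ∫ x in a..b, u x • derivWithin v (Set.Icc a b) x =
      -∫ x in a..b, derivWithin u (Set.Icc a b) x • v x := by
  have hI : UniqueDiffOn ℝ (Set.Icc a b) := uniqueDiffOn_Icc hab
  have hIcc : Set.uIcc a b = Set.Icc a b := Set.uIcc_of_le hab.le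
  rw [intervalIntegral.integral_smul_deriv_eq_deriv_smul_of_hasDerivWithinAt
    (u' := derivWithin u (Set.Icc a b)) (v' := derivWithin v (Set.Icc a b)), ha, hb, sub_self,
    zero_sub]
  · rw [hIcc]
    exact fun x hx => (hu.differentiableOn one_ne_zero x hx).hasDerivWithinAt
  · rw [hIcc]
    exact fun x hx => (hv.differentiableOn one_ne_zero x hx).hasDerivWithinAt
  · exact (hu.continuousOn_derivWithin hI le_rfl).intervalIntegrable_of_Icc hab.le
  · exact (hv.continuousOn_derivWithin hI le_rfl).intervalIntegrable_of_Icc hab.le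

theorem integral_smul_sturmLiouville {k : ℝ → ℝ} (hab : a < b)
    (hp : ContDiffOn ℝ 1 p (Set.Icc a b)) (hpa : p a = 0) (hpb : p b = 0)
    (hq : IntervalIntegrable q volume a b)
    (hk : ContDiffOn ℝ 2 k (Set.Icc a b)) (hf : ContDiffOn ℝ 2 f (Set.Icc a b)) :
    ∫ x in a..b, k x • sturmLiouville p q (Set.Icc a b) f x =
      ∫ x in a..b, sturmLiouville p q (Set.Icc a b) k x • f x := by
  set I := Set.Icc a b
  have hI : UniqueDiffOn ℝ I := uniqueDiffOn_Icc hab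
  have hIcc : Set.uIcc a b = I := Set.uIcc_of_le hab.le
  have hpk' : ContDiffOn ℝ 1 (fun t => p t • derivWithin k I t) I :=
    hp.smul (hk.derivWithin hI one_add_one_eq_two.le)
  have hpf' : ContDiffOn ℝ 1 (fun t => p t • derivWithin f I t) I :=
    hp.smul (hf.derivWithin hI one_add_one_eq_two.le)
  have hprincipal : ∫ x in a..b, k x • derivWithin (fun t => p t • derivWithin f I t) I x =
      ∫ x in a..b, derivWithin (fun t => p t • derivWithin k I t) I x • f x := by
    calc
      _ = -∫ x in a..b, derivWithin k I x • p x • derivWithin f I x :=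
        integral_smul_derivWithin_eq_neg_of_boundary_eq_zero hab (hk.of_le one_le_two) hpf'
          (by simp [hpa]) (by simp [hpb])
      _ = -∫ x in a..b, (p x • derivWithin k I x) • derivWithin f I x := by
        simp only [smul_assoc, smul_comm (p _)]
      _ = _ := by
        rw [integral_smul_derivWithin_eq_neg_of_boundary_eq_zero hab hpk' (hf.of_le one_le_two)
          (by simp [hpa]) (by simp [hpb]), neg_neg]
  have hkc : ContinuousOn k (Set.uIcc a b) := hIcc ▸ hk.continuousOn
  have hfc : ContinuousOn f (Set.uIcc a b) := hIcc ▸ hf.continuousOn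
  have hLf : IntervalIntegrable (derivWithin (fun t => p t • derivWithin f I t) I) volume a b :=
    (hpf'.continuousOn_derivWithin hI le_rfl).intervalIntegrable_of_Icc hab.le
  have hLk : IntervalIntegrable (derivWithin (fun t => p t • derivWithin k I t) I) volume a b :=
    (hpk'.continuousOn_derivWithin hI le_rfl).intervalIntegrable_of_Icc hab.le
  have hpotential : ∫ x in a..b, k x • q x • f x = ∫ x in a..b, (q x • k x) • f x := by
    simp only [smul_assoc, smul_comm (q _)]
  simp only [sturmLiouville, smul_sub, sub_smul]
  rw [intervalIntegral.integral_sub (hLf.continuousOn_smul hkc)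
      ((hq.smul_continuousOn hfc).continuousOn_smul hkc),
    intervalIntegral.integral_sub (hLk.smul_continuousOn hfc)
      ((hq.smul_continuousOn hkc).smul_continuousOn hfc), hprincipal, hpotential]

theorem sturmLiouville_integral_kernel_comm {K : ℝ → ℝ → ℝ} (hab : a < b)
    (hp : ContDiffOn ℝ 1 p (Set.Icc a b)) (hpa : p a = 0) (hpb : p b = 0)
    (hq : IntervalIntegrable q volume a b) (hK : ContDiff ℝ 2 ↿K)
    (hf : ContDiffOn ℝ 2 f (Set.Icc a b)) {x : ℝ} (hx : x ∈ Set.Icc a b)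
    (hLK : ∀ y ∈ Set.Icc a b, sturmLiouville p q (Set.Icc a b) (K · y) x =
      sturmLiouville p q (Set.Icc a b) (K x) y) :
    sturmLiouville p q (Set.Icc a b) (fun t => ∫ y in a..b, K t y • f y) x =
      ∫ y in a..b, K x y • sturmLiouville p q (Set.Icc a b) f y := by
  have hKx : ContDiff ℝ 2 (K x) := hK.comp (contDiff_prodMk_right x)
  calc
    _ = ∫ y in a..b, sturmLiouville p q (Set.Icc a b) (K · y) x • f y :=
      sturmLiouville_integral_kernel_smul hK (hf.continuousOn.intervalIntegrable_of_Icc hab.le)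
        (uniqueDiffOn_Icc hab) hx (hp.differentiableOn one_ne_zero x hx)
    _ = ∫ y in a..b, sturmLiouville p q (Set.Icc a b) (K x) y • f y :=
      intervalIntegral.integral_congr fun y hy => by
        rw [Set.uIcc_of_le hab.le] at hy
        simp only [hLK y hy]
    _ = _ := (integral_smul_sturmLiouville hab hp hpa hpb hq hKx.contDiffOn hf).symm

end SturmLiouville

section Sinc

theorem analyticAt_dslope {𝕜 E : Type*} [NontriviallyNormedField 𝕜] [NormedAddCommGroup E]
    [NormedSpace 𝕜 E] {f : 𝕜 → E} {a b : 𝕜} (ha : AnalyticAt 𝕜 f a) (hb : AnalyticAt 𝕜 f b) :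
    AnalyticAt 𝕜 (dslope f a) b := by
  rcases eq_or_ne b a with rfl | hba
  · obtain ⟨P, hP⟩ := ha
    exact ⟨P.fslope, hP.has_fpower_series_dslope_fslope⟩
  · refine AnalyticAt.congr ?_ (dslope_eventuallyEq_slope_of_ne f hba).symm
    exact ((analyticAt_id.sub analyticAt_const).inv (sub_ne_zero.mpr hba)).smul
      (hb.sub analyticAt_const)

theorem contDiff_sinc {n : WithTop ℕ∞} : ContDiff ℝ n sinc := by
  rw [sinc_eq_dslope]
  exact contDiff_iff_contDiffAt.mpr fun x =>
    (analyticAt_dslope analyticAt_sin analyticAt_sin).contDiffAt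

theorem mul_sinc (x : ℝ) : x * sinc x = sin x := by
  rcases eq_or_ne x 0 with rfl | hx
  · simp
  · rw [sinc_of_ne_zero hx, mul_div_cancel₀ _ hx]

theorem hasDerivAt_sinc (x : ℝ) : HasDerivAt sinc (deriv sinc x) x :=
  (contDiff_sinc.differentiable one_ne_zero x).hasDerivAt

theorem hasDerivAt_deriv_sinc (x : ℝ) : HasDerivAt (deriv sinc) (deriv (deriv sinc) x) x :=
  ((contDiff_sinc (n := 2)).differentiable_deriv_two x).hasDerivAt

theorem sinc_add_mul_deriv_sinc (x : ℝ) : sinc x + x * deriv sinc x = cos x := by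
  have h := (hasDerivAt_id x).mul (hasDerivAt_sinc x)
  rw [show id * sinc = sin from funext mul_sinc] at h
  simpa using h.unique (hasDerivAt_sin x)

/-- The spherical Bessel equation of order `0`. -/
theorem mul_deriv_deriv_sinc (x : ℝ) :
    x * deriv (deriv sinc) x = -(2 * deriv sinc x + x * sinc x) := by
  have h := (hasDerivAt_sinc x).add ((hasDerivAt_id x).mul (hasDerivAt_deriv_sinc x))
  rw [show sinc + id * deriv sinc = cos from funext sinc_add_mul_deriv_sinc] at h
  have h' := h.unique (hasDerivAt_cos x)
  rw [← mul_sinc x] at h'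
  simp only [id_eq] at h'
  linear_combination h'

end Sinc

theorem sincKernel_eq_sinc (c x y : ℝ) : sincKernel c x y = c / π * sinc (c * (x - y)) := by
  rcases eq_or_ne c 0 with rfl | hc
  · simp [sincKernel]
  rcases eq_or_ne x y with rfl | hxy
  · simp [sincKernel]
  · have hsub : x - y ≠ 0 := sub_ne_zero.mpr hxy
    rw [sincKernel, if_neg hxy, sinc_of_ne_zero (mul_ne_zero hc hsub)]
    field_simp

theorem contDiff_uncurry_sincKernel {n : WithTop ℕ∞} (c : ℝ) : ContDiff ℝ n ↿(sincKernel c) := by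
  have h : ↿(sincKernel c) = fun z : ℝ × ℝ => c / π * sinc (c * (z.1 - z.2)) :=
    funext fun z => sincKernel_eq_sinc c z.1 z.2
  rw [h]
  exact contDiff_const.mul
    (contDiff_sinc.comp (contDiff_const.mul (contDiff_fst.sub contDiff_snd)))

theorem Lop_eq_sturmLiouville (c : ℝ) (ψ : ℝ → ℝ) :
    Lop c ψ = sturmLiouville (fun t => 1 - t ^ 2) (fun t => c ^ 2 * t ^ 2) (Set.Icc (-1) 1) ψ :=
  rfl

theorem Lop_const_mul_sinc_comp_affine (c A m d : ℝ) {x : ℝ} (hx : x ∈ Set.Icc (-1 : ℝ) 1) :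
    Lop c (fun t => A * sinc (m * t + d)) x =
      (1 - x ^ 2) * (A * m ^ 2 * deriv (deriv sinc) (m * x + d)) -
        2 * x * (A * m * deriv sinc (m * x + d)) - c ^ 2 * x ^ 2 * (A * sinc (m * x + d)) := by
  have haff (t : ℝ) : HasDerivAt (fun t => m * t + d) m t := by
    simpa using ((hasDerivAt_id t).const_mul m).add_const d
  have hp : HasDerivAt (fun t : ℝ => 1 - t ^ 2) (-(2 * x)) x := by
    simpa using (hasDerivAt_pow 2 x).const_sub 1
  have h₁ (t : ℝ) : HasDerivAt (fun t => A * sinc (m * t + d))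
      (A * (deriv sinc (m * t + d) * m)) t :=
    ((hasDerivAt_sinc _).comp t (haff t)).const_mul A
  have h₂ : HasDerivAt (fun t => A * (deriv sinc (m * t + d) * m))
      (A * (deriv (deriv sinc) (m * x + d) * m * m)) x :=
    (((hasDerivAt_deriv_sinc _).comp x (haff x)).mul_const m).const_mul A
  rw [Lop_eq_sturmLiouville, sturmLiouville_eq_of_hasDerivWithinAt (uniqueDiffOn_Icc (by norm_num))
    hx hp.hasDerivWithinAt (fun t _ => (h₁ t).hasDerivWithinAt) h₂.hasDerivWithinAt]
  simp only [smul_eq_mul]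
  ring

theorem Lop_sincKernel_symm (c : ℝ) {x y : ℝ} (hx : x ∈ Set.Icc (-1 : ℝ) 1)
    (hy : y ∈ Set.Icc (-1 : ℝ) 1) : Lop c (sincKernel c · y) x = Lop c (sincKernel c x) y := by
  have hleft : (sincKernel c · y) = fun t => c / π * sinc (c * t + -(c * y)) := by
    funext t
    rw [sincKernel_eq_sinc, mul_sub, sub_eq_add_neg]
  have hright : sincKernel c x = fun t => c / π * sinc (-c * t + c * x) := by
    funext t
    rw [sincKernel_eq_sinc, mul_sub, sub_eq_neg_add, neg_mul]
  have hx_arg : c * x + -(c * y) = c * (x - y) := by ring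
  have hy_arg : -c * y + c * x = c * (x - y) := by ring
  rw [hleft, hright, Lop_const_mul_sinc_comp_affine c _ _ _ hx,
    Lop_const_mul_sinc_comp_affine c _ _ _ hy, hx_arg, hy_arg]
  linear_combination -(c ^ 2 / π * (x + y)) * mul_deriv_deriv_sinc (c * (x - y))

theorem contDiff_Qop (c : ℝ) {ψ : ℝ → ℝ} (hψ : IntervalIntegrable ψ volume (-1) 1) :
    ContDiff ℝ (⊤ : ℕ∞) (Qop c ψ) :=
  contDiff_integral_kernel_smul (contDiff_uncurry_sincKernel c) hψ

theorem Lop_Qop_comm (c : ℝ) {ψ : ℝ → ℝ} (hψ : ContDiffOn ℝ 2 ψ (Set.Icc (-1) 1)) {x : ℝ}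
    (hx : x ∈ Set.Icc (-1 : ℝ) 1) : Lop c (Qop c ψ) x = Qop c (Lop c ψ) x :=
  sturmLiouville_integral_kernel_comm (p := fun t => 1 - t ^ 2) (q := fun t => c ^ 2 * t ^ 2)
    (by norm_num) (by fun_prop) (by norm_num) (by norm_num)
    (Continuous.intervalIntegrable (by fun_prop) _ _) (contDiff_uncurry_sincKernel c) hψ hx
    fun _ hy => Lop_sincKernel_symm c hx hy

/-- The sinc concentration operator commutes with the prolate spheroidal
Sturm–Liouville operator: for `c > 0` and `ψ` twice continuously differentiable on
`[−1,1]`, `Qψ` is smooth and `L(Qψ)(x) = Q(Lψ)(x)` for every `x ∈ [−1,1]`.  Consequently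
`Q` and `L` share eigenfunctions. -/
theorem sinc_operator_commutes_with_sturm_liouville
    (c : ℝ) (hc : 0 < c)
    (ψ : ℝ → ℝ) (hψ : ContDiffOn ℝ 2 ψ (Set.Icc (-1) 1)) :
    ContDiff ℝ (⊤ : ℕ∞) (Qop c ψ) ∧
    ∀ x ∈ Set.Icc (-1:ℝ) 1, Lop c (Qop c ψ) x = Qop c (Lop c ψ) x := by
  have hint : IntervalIntegrable ψ volume (-1) 1 :=
    hψ.continuousOn.intervalIntegrable_of_Icc (by norm_num)
  exact ⟨contDiff_Qop c hint, fun _ hx => Lop_Qop_comm c hψ hx⟩
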